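/- arXiv:1309.6423 — 2 statements merged into one kernel-verified Lean document; each statement's English description precedes it below -/
import Mathlib

section
/- Berkson–Porta theorem (generation direction): let τ be a point of the closed unit disk and let p : 𝔻 → ℂ be holomorphic with Re p(z) ≥ 0 for all z ∈ 𝔻; set G(z) = (z − τ)(conj(τ)·z − 1)·p(z). Then G is semicomplete: for every z ∈ 𝔻 the initial value problem w'(t) = G(w(t)), w(0) = z has a unique solution w_z : [0, ∞) → 𝔻, and the family φ_t(z) := w_z(t) is a one-parameter semigroup of holomorphic self-maps of 𝔻 (each φ_t is holomorphic 𝔻 → 𝔻, φ₀ = id, φ_{t+s} = φ_s ∘ φ_t, and t ↦ φ_t is continuous for locally uniform convergence). -/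
open Complex Metric Set

noncomputable section

/-- The Berkson–Porta vector field `G(z) = (z − τ)(conj(τ)z − 1) p(z)`. -/
def berksonPortaField (τ : ℂ) (p : ℂ → ℂ) (z : ℂ) : ℂ :=
  (z - τ) * ((starRingEnd ℂ) τ * z - 1) * p z

/-- The disk automorphism `ζ ↦ (ζ + z) / (1 + conj z * ζ)` maps the disk to itself. -/
lemma norm_add_lt_norm_one_add_conj_mul {z ζ : ℂ} (hz : ‖z‖ < 1) (hζ : ‖ζ‖ < 1) :
    ‖ζ + z‖ < ‖1 + (starRingEnd ℂ) z * ζ‖ := by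
  rw [← sq_lt_sq₀ (norm_nonneg _) (norm_nonneg _)]
  have h1 : z.re * z.re + z.im * z.im < 1 := by
    rw [← Complex.normSq_apply, Complex.normSq_eq_norm_sq]
    nlinarith [norm_nonneg z]
  have h2 : ζ.re * ζ.re + ζ.im * ζ.im < 1 := by
    rw [← Complex.normSq_apply, Complex.normSq_eq_norm_sq]
    nlinarith [norm_nonneg ζ]
  simp only [← Complex.normSq_eq_norm_sq, Complex.normSq_apply, add_re, add_im, mul_re, mul_im,
    conj_re, conj_im, one_re, one_im]
  nlinarith [mul_pos (sub_pos.2 h1) (sub_pos.2 h2)]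

/-- The Schwarz–Pick inequality for maps from the disk to the open right half-plane. -/
lemma norm_deriv_mul_le_two_mul_re_of_pos {P : ℂ → ℂ} (hP : DifferentiableOn ℂ P (ball 0 1))
    (hpos : ∀ z ∈ ball (0 : ℂ) 1, 0 < (P z).re) {z : ℂ} (hz : z ∈ ball (0 : ℂ) 1) :
    ‖deriv P z‖ * (1 - ‖z‖ ^ 2) ≤ 2 * (P z).re := by
  have hz1 : ‖z‖ < 1 := by simpa using hz
  set M : ℂ → ℂ := fun ζ => (ζ + z) / (1 + (starRingEnd ℂ) z * ζ) with hM
  have hden : ∀ ζ ∈ ball (0 : ℂ) 1, 1 + (starRingEnd ℂ) z * ζ ≠ 0 := fun ζ hζ => by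
    have := norm_add_lt_norm_one_add_conj_mul hz1 (by simpa using hζ)
    exact norm_pos_iff.1 ((norm_nonneg _).trans_lt this)
  have hMm : MapsTo M (ball 0 1) (ball 0 1) := fun ζ hζ => by
    have := norm_add_lt_norm_one_add_conj_mul hz1 (by simpa using hζ)
    rw [mem_ball_zero_iff, hM, norm_div, div_lt_one ((norm_nonneg _).trans_lt this)]
    exact this
  have hMd : DifferentiableOn ℂ M (ball 0 1) := by
    refine DifferentiableOn.div (by fun_prop) (by fun_prop) hden
  have hPM : DifferentiableOn ℂ (P ∘ M) (ball 0 1) := hP.comp hMd hMm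
  have hM0 : M 0 = z := by simp [hM]
  have hden2 : ∀ ζ ∈ ball (0 : ℂ) 1, (P ∘ M) ζ + (starRingEnd ℂ) (P z) ≠ 0 := fun ζ hζ h => by
    have h1 := hpos _ (hMm hζ)
    have h2 := hpos _ hz
    have := congrArg Complex.re h
    simp at this
    linarith
  set f : ℂ → ℂ := fun ζ => ((P ∘ M) ζ - P z) / ((P ∘ M) ζ + (starRingEnd ℂ) (P z)) with hf
  have hfd : DifferentiableOn ℂ f (ball 0 1) :=
    DifferentiableOn.div (hPM.sub_const _) (hPM.add_const _) hden2
  have hf0 : f 0 = 0 := by simp [hf, hM0]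
  have hfm : MapsTo f (ball 0 1) (closedBall (f 0) 1) := fun ζ hζ => by
    rw [hf0, mem_closedBall_zero_iff, hf, norm_div,
      div_le_one (norm_pos_iff.2 (hden2 ζ hζ)), ← sq_le_sq₀ (norm_nonneg _) (norm_nonneg _)]
    have h1 := hpos _ (hMm hζ)
    have h2 := hpos _ hz
    simp only [← Complex.normSq_eq_norm_sq, Complex.normSq_apply, add_re, add_im, sub_re, sub_im,
      conj_re, conj_im, Function.comp]
    nlinarith [mul_pos h1 h2]
  have key := Complex.norm_deriv_le_one_of_mapsTo_ball hfd hfm one_pos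
  have hMder : HasDerivAt M (1 - (starRingEnd ℂ) z * z) 0 := by
    have := ((hasDerivAt_id (0 : ℂ)).add_const z).div
      (((hasDerivAt_id (0 : ℂ)).const_mul ((starRingEnd ℂ) z)).const_add 1) (by simp)
    exact this.congr_deriv (by simp [mul_comm])
  have hPd : HasDerivAt P (deriv P z) (M 0) := by
    rw [hM0]
    exact (hP.differentiableAt (isOpen_ball.mem_nhds hz)).hasDerivAt
  have hPMd := hPd.comp (0 : ℂ) hMder
  have hfder := (hPMd.sub_const (P z)).div (hPMd.add_const ((starRingEnd ℂ) (P z)))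
    (hden2 0 (by simp))
  have hre : P z + (starRingEnd ℂ) (P z) = ((2 * (P z).re : ℝ) : ℂ) := Complex.add_conj _
  have hzz : 1 - (starRingEnd ℂ) z * z = ((1 - ‖z‖ ^ 2 : ℝ) : ℂ) := by
    rw [Complex.conj_mul']; push_cast; ring
  have h2 := hpos _ hz
  have hfd0 : deriv f 0 = deriv P z * ((1 - ‖z‖ ^ 2 : ℝ) : ℂ) / ((2 * (P z).re : ℝ) : ℂ) := by
    have hne : ((2 * (P z).re : ℝ) : ℂ) ≠ 0 := by
      exact_mod_cast (by positivity : (2 * (P z).re) ≠ 0)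
    rw [← hzz, ← hre] at *
    rw [show deriv f 0 = _ from hfder.deriv]
    simp only [Function.comp, hM0, sub_self, zero_mul, sub_zero]
    field_simp
  rw [hfd0, norm_div, norm_mul, Complex.norm_real, Complex.norm_real,
    Real.norm_of_nonneg (by nlinarith [norm_nonneg z]), Real.norm_of_nonneg (by positivity),
    div_le_one (by positivity)] at key
  exact key

/-- The Schwarz–Pick inequality for maps from the disk to the closed right half-plane. -/
lemma norm_deriv_mul_le_two_mul_re {p : ℂ → ℂ} (hp : DifferentiableOn ℂ p (ball 0 1))
    (hre : ∀ z ∈ ball (0 : ℂ) 1, 0 ≤ (p z).re) {z : ℂ} (hz : z ∈ ball (0 : ℂ) 1) :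
    ‖deriv p z‖ * (1 - ‖z‖ ^ 2) ≤ 2 * (p z).re := by
  refine le_of_forall_pos_le_add fun ε hε => ?_
  have := norm_deriv_mul_le_two_mul_re_of_pos (P := fun z => p z + ((ε / 2 : ℝ) : ℂ))
    (hp.add_const _) (fun z hz => by
      have := hre z hz
      rw [add_re, ofReal_re]; linarith) hz
  rw [deriv_add_const, add_re, ofReal_re] at this
  linarith

lemma differentiableOn_berksonPortaField (τ : ℂ) {p : ℂ → ℂ}
    (hp : DifferentiableOn ℂ p (ball 0 1)) :
    DifferentiableOn ℂ (berksonPortaField τ p) (ball 0 1) :=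
  DifferentiableOn.mul (by fun_prop) hp

/-- Infinitesimal contraction of the hyperbolic metric by the Berkson–Porta field. -/
lemma re_berksonPortaField_le (τ : ℂ) {p : ℂ → ℂ} (hp : DifferentiableOn ℂ p (ball 0 1))
    (hre : ∀ z ∈ ball (0 : ℂ) 1, 0 ≤ (p z).re) {z : ℂ} (hz : z ∈ ball (0 : ℂ) 1) :
    2 * ((starRingEnd ℂ) z * berksonPortaField τ p z).re +
      (1 - ‖z‖ ^ 2) * (deriv (berksonPortaField τ p) z).re ≤ 0 := by
  have hsp := norm_deriv_mul_le_two_mul_re hp hre hz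
  have hz1 : ‖z‖ < 1 := by simpa using hz
  have hder : deriv (berksonPortaField τ p) z =
      (((starRingEnd ℂ) τ * z - 1) + (z - τ) * (starRingEnd ℂ) τ) * p z +
        (z - τ) * ((starRingEnd ℂ) τ * z - 1) * deriv p z := by
    have h := ((((hasDerivAt_id z).sub_const τ).mul
      (((hasDerivAt_id z).const_mul ((starRingEnd ℂ) τ)).sub_const 1)).mul
      (hp.differentiableAt (isOpen_ball.mem_nhds hz)).hasDerivAt).deriv
    refine Eq.trans h ?_
    simp
  set A := ‖z - τ‖
  set B := ‖(starRingEnd ℂ) τ * z - 1‖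
  have hlast : (1 - ‖z‖ ^ 2) * ((z - τ) * ((starRingEnd ℂ) τ * z - 1) * deriv p z).re ≤
      A * B * (2 * (p z).re) := by
    have h1 : ((z - τ) * ((starRingEnd ℂ) τ * z - 1) * deriv p z).re ≤ A * B * ‖deriv p z‖ := by
      refine (Complex.re_le_norm _).trans_eq ?_
      rw [norm_mul, norm_mul]
    have h3 : 0 ≤ 1 - ‖z‖ ^ 2 := by nlinarith [norm_nonneg z]
    have h2 : 0 ≤ A * B := by positivity
    nlinarith [mul_le_mul_of_nonneg_left h1 h3, mul_le_mul_of_nonneg_left hsp h2]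
  have hmain : 2 * ((starRingEnd ℂ) z * berksonPortaField τ p z).re + (1 - ‖z‖ ^ 2) *
      ((((starRingEnd ℂ) τ * z - 1) + (z - τ) * (starRingEnd ℂ) τ) * p z).re =
      -(A ^ 2 + B ^ 2) * (p z).re := by
    simp only [A, B, berksonPortaField, ← Complex.normSq_eq_norm_sq, Complex.normSq_apply, add_re,
      add_im, sub_re, sub_im, mul_re, mul_im, conj_re, conj_im, one_re, one_im]
    ring
  rw [hder, add_re, mul_add]
  nlinarith [mul_nonneg (sq_nonneg (A - B)) (hre z hz)]

/-- `w` solves `w' = G(w)` on `[0, T]` and stays in the unit disk. -/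
def IsDiskTrajectory (G : ℂ → ℂ) (T : ℝ) (w : ℝ → ℂ) : Prop :=
  ∀ t ∈ Icc 0 T, w t ∈ ball (0 : ℂ) 1 ∧ HasDerivWithinAt w (G (w t)) (Icc 0 T) t

/-- The field `G` infinitesimally contracts the hyperbolic metric of the unit disk. -/
def ContractsHyperbolic (G : ℂ → ℂ) : Prop :=
  ∀ z ∈ ball (0 : ℂ) 1,
    2 * ((starRingEnd ℂ) z * G z).re + (1 - ‖z‖ ^ 2) * (deriv G z).re ≤ 0

/-- The hyperbolic length of `G z`. -/
def hyperbolicSpeed (G : ℂ → ℂ) (z : ℂ) : ℝ := ‖G z‖ / (1 - ‖z‖ ^ 2)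

lemma one_sub_norm_sq_pos {z : ℂ} (hz : z ∈ ball (0 : ℂ) 1) : 0 < 1 - ‖z‖ ^ 2 := by
  have : ‖z‖ < 1 := by simpa using hz
  nlinarith [norm_nonneg z]

lemma hyperbolicSpeed_nonneg (G : ℂ → ℂ) {z : ℂ} (hz : z ∈ ball (0 : ℂ) 1) :
    0 ≤ hyperbolicSpeed G z :=
  div_nonneg (norm_nonneg _) (one_sub_norm_sq_pos hz).le

lemma continuousOn_hyperbolicSpeed {G : ℂ → ℂ} (hG : DifferentiableOn ℂ G (ball 0 1)) :
    ContinuousOn (hyperbolicSpeed G) (ball 0 1) :=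
  hG.continuousOn.norm.div (by fun_prop) fun _ hz => (one_sub_norm_sq_pos hz).ne'

namespace IsDiskTrajectory

variable {G : ℂ → ℂ} {T : ℝ} {w : ℝ → ℂ}

lemma mono {S : ℝ} (hw : IsDiskTrajectory G T w) (hS : S ≤ T) : IsDiskTrajectory G S w :=
  fun t ht => ⟨(hw t ⟨ht.1, ht.2.trans hS⟩).1,
    (hw t ⟨ht.1, ht.2.trans hS⟩).2.mono (Icc_subset_Icc_right hS)⟩

lemma continuousOn (hw : IsDiskTrajectory G T w) : ContinuousOn w (Icc 0 T) :=
  fun t ht => (hw t ht).2.continuousWithinAt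

lemma hasDerivAt (hw : IsDiskTrajectory G T w) {t : ℝ} (ht : t ∈ Ioo 0 T) :
    HasDerivAt w (G (w t)) t :=
  (hw t (Ioo_subset_Icc_self ht)).2.hasDerivAt (Icc_mem_nhds ht.1 ht.2)

lemma hasDerivWithinAt_Ici (hw : IsDiskTrajectory G T w) {t : ℝ} (ht : t ∈ Ico 0 T) :
    HasDerivWithinAt w (G (w t)) (Ici t) t :=
  (hw t (Ico_subset_Icc_self ht)).2.mono_of_mem_nhdsWithin (Icc_mem_nhdsGE_of_mem ht)

lemma hyperbolicSpeed_le (hG : DifferentiableOn ℂ G (ball 0 1)) (hc : ContractsHyperbolic G)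
    (hw : IsDiskTrajectory G T w) {t : ℝ} (ht : t ∈ Icc 0 T) :
    hyperbolicSpeed G (w t) ≤ hyperbolicSpeed G (w 0) := by
  have hmaps : MapsTo w (Icc 0 T) (ball 0 1) := fun t ht => (hw t ht).1
  have hanti : AntitoneOn (fun t => ‖G (w t)‖ ^ 2 / (1 - ‖w t‖ ^ 2) ^ 2) (Icc 0 T) := by
    have hd : ∀ t ∈ Ioo 0 T, HasDerivAt (fun t => ‖G (w t)‖ ^ 2 / (1 - ‖w t‖ ^ 2) ^ 2)
        (2 * ‖G (w t)‖ ^ 2 / (1 - ‖w t‖ ^ 2) ^ 3 *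
          (2 * ((starRingEnd ℂ) (w t) * G (w t)).re +
            (1 - ‖w t‖ ^ 2) * (deriv G (w t)).re)) t := fun t ht => by
      have h1 := hw.hasDerivAt ht
      have hmem := hmaps (Ioo_subset_Icc_self ht)
      have h2 : HasDerivAt (fun t => G (w t)) (deriv G (w t) * G (w t)) t :=
        (hG.differentiableAt (isOpen_ball.mem_nhds hmem)).hasDerivAt.comp t h1
      have hne := (one_sub_norm_sq_pos hmem).ne'
      refine (h2.norm_sq.div ((h1.norm_sq.const_sub 1).pow 2) (pow_ne_zero 2 hne)).congr_deriv ?_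
      have e1 : inner ℝ (w t) (G (w t)) = ((starRingEnd ℂ) (w t) * G (w t)).re := by
        rw [Complex.inner, mul_comm]
      have e2 : inner ℝ (G (w t)) (deriv G (w t) * G (w t)) =
          ‖G (w t)‖ ^ 2 * (deriv G (w t)).re := by
        rw [Complex.inner, mul_assoc, Complex.mul_conj, Complex.normSq_eq_norm_sq, mul_comm,
          Complex.re_ofReal_mul]
      rw [e1, e2]
      simp only [Pi.pow_apply]
      field_simp
      ring
    refine antitoneOn_of_deriv_nonpos (convex_Icc _ _) ?_ ?_ ?_
    · refine ContinuousOn.div ?_ ?_ fun t ht => pow_ne_zero 2 (one_sub_norm_sq_pos (hmaps ht)).ne'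
      · exact (hG.continuousOn.comp hw.continuousOn hmaps).norm.pow 2
      · exact (continuousOn_const.sub (hw.continuousOn.norm.pow 2)).pow 2
    · rw [interior_Icc]
      exact fun t ht => (hd t ht).differentiableAt.differentiableWithinAt
    · rw [interior_Icc]
      intro t ht
      have hmem := hmaps (Ioo_subset_Icc_self ht)
      have := one_sub_norm_sq_pos hmem
      rw [(hd t ht).deriv]
      exact mul_nonpos_of_nonneg_of_nonpos (by positivity) (hc _ hmem)
  have h0 : (0 : ℝ) ∈ Icc 0 T := ⟨le_rfl, ht.1.trans ht.2⟩
  have := hanti h0 ht ht.1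
  simp only [← div_pow] at this
  exact (sq_le_sq₀ (hyperbolicSpeed_nonneg G (hmaps ht)) (hyperbolicSpeed_nonneg G (hmaps h0))).1
    this

lemma norm_field_le (hG : DifferentiableOn ℂ G (ball 0 1)) (hc : ContractsHyperbolic G)
    (hw : IsDiskTrajectory G T w) {t : ℝ} (ht : t ∈ Icc 0 T) :
    ‖G (w t)‖ ≤ hyperbolicSpeed G (w 0) * (1 - ‖w t‖ ^ 2) :=
  (div_le_iff₀ (one_sub_norm_sq_pos (hw t ht).1)).1 (hw.hyperbolicSpeed_le hG hc ht)

lemma mul_exp_le (hG : DifferentiableOn ℂ G (ball 0 1)) (hc : ContractsHyperbolic G)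
    (hw : IsDiskTrajectory G T w) {t : ℝ} (ht : t ∈ Icc 0 T) :
    (1 - ‖w 0‖ ^ 2) * Real.exp (-(2 * hyperbolicSpeed G (w 0) * t)) ≤ 1 - ‖w t‖ ^ 2 := by
  set C := hyperbolicSpeed G (w 0)
  have hmono : MonotoneOn (fun t => (1 - ‖w t‖ ^ 2) * Real.exp (2 * C * t)) (Icc 0 T) := by
    have hd : ∀ t ∈ Ioo 0 T, HasDerivAt (fun t => (1 - ‖w t‖ ^ 2) * Real.exp (2 * C * t))
        (-(2 * inner ℝ (w t) (G (w t))) * Real.exp (2 * C * t) +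
          (1 - ‖w t‖ ^ 2) * (Real.exp (2 * C * t) * (2 * C * 1))) t := fun t ht =>
      ((hw.hasDerivAt ht).norm_sq.const_sub 1).mul
        (((hasDerivAt_id t).const_mul (2 * C)).exp)
    refine monotoneOn_of_deriv_nonneg (convex_Icc _ _) ?_ ?_ ?_
    · exact (continuousOn_const.sub (hw.continuousOn.norm.pow 2)).mul (by fun_prop)
    · rw [interior_Icc]
      exact fun t ht => (hd t ht).differentiableAt.differentiableWithinAt
    · rw [interior_Icc]
      intro t ht
      have ht' := Ioo_subset_Icc_self ht
      have h1 : ‖w t‖ < 1 := by simpa using (hw t ht').1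
      have h2 := hw.norm_field_le hG hc ht'
      have h3 : inner ℝ (w t) (G (w t)) ≤ ‖G (w t)‖ :=
        (real_inner_le_norm _ _).trans (mul_le_of_le_one_left (norm_nonneg _) h1.le)
      rw [(hd t ht).deriv]
      have := Real.exp_pos (2 * C * t)
      have h4 : 0 ≤ 2 * (C * (1 - ‖w t‖ ^ 2) - inner ℝ (w t) (G (w t))) := by linarith
      linarith [mul_nonneg h4 this.le]
  have := hmono ⟨le_rfl, ht.1.trans ht.2⟩ ht ht.1
  simp only [mul_zero, Real.exp_zero, mul_one] at this
  rw [Real.exp_neg, ← div_eq_mul_inv, div_le_iff₀ (Real.exp_pos _)]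
  exact this

/-- Trajectories starting in a compact subset of the disk stay, for bounded times, in a fixed
smaller closed disk. -/
lemma exists_radius (hG : DifferentiableOn ℂ G (ball 0 1)) (hc : ContractsHyperbolic G)
    {s : Set ℂ} (hs : IsCompact s) (hsub : s ⊆ ball 0 1) (T : ℝ) :
    ∃ R < 1, s ⊆ closedBall 0 R ∧ ∀ S ≤ T, ∀ w, IsDiskTrajectory G S w → w 0 ∈ s →
      ∀ t ∈ Icc 0 S, w t ∈ closedBall (0 : ℂ) R := by
  rcases s.eq_empty_or_nonempty with rfl | hne
  · exact ⟨0, zero_lt_one, empty_subset _, fun _ _ _ _ h => absurd h (notMem_empty _)⟩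
  obtain ⟨a, ha, hmin⟩ := hs.exists_isMinOn hne
    (f := fun z => (1 - ‖z‖ ^ 2) * Real.exp (-(2 * hyperbolicSpeed G z * max T 0))) (by
      have := (continuousOn_hyperbolicSpeed hG).mono hsub
      fun_prop)
  set δ := (1 - ‖a‖ ^ 2) * Real.exp (-(2 * hyperbolicSpeed G a * max T 0))
  have hδ : 0 < δ := mul_pos (one_sub_norm_sq_pos (hsub ha)) (Real.exp_pos _)
  have hle : ∀ z ∈ s, ∀ t ∈ Icc 0 (max T 0),
      δ ≤ (1 - ‖z‖ ^ 2) * Real.exp (-(2 * hyperbolicSpeed G z * t)) := fun z hz t ht => by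
    have h1 := hyperbolicSpeed_nonneg G (hsub hz)
    have h2 := (one_sub_norm_sq_pos (hsub hz)).le
    refine (isMinOn_iff.1 hmin z hz).trans ?_
    have := ht.2
    gcongr
  refine ⟨Real.sqrt (1 - δ), by rw [Real.sqrt_lt' one_pos]; linarith, fun z hz => ?_,
    fun S hS w hw h0 t ht => ?_⟩
  · rw [mem_closedBall_zero_iff]
    refine Real.le_sqrt_of_sq_le ?_
    have := hle z hz 0 ⟨le_rfl, le_max_right _ _⟩
    simp at this
    linarith
  · rw [mem_closedBall_zero_iff]
    refine Real.le_sqrt_of_sq_le ?_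
    have := hle _ h0 t ⟨ht.1, (ht.2.trans hS).trans (le_max_left _ _)⟩
    linarith [hw.mul_exp_le hG hc ht]

end IsDiskTrajectory

lemma exists_lipschitzOnWith_closedBall {G : ℂ → ℂ} (hG : DifferentiableOn ℂ G (ball 0 1))
    {R : ℝ} (hR : R < 1) : ∃ K, LipschitzOnWith K G (closedBall 0 R) := by
  have hsub : closedBall (0 : ℂ) R ⊆ ball 0 1 := closedBall_subset_ball hR
  have hcont : ContinuousOn (deriv G) (closedBall 0 R) :=
    (hG.deriv isOpen_ball).continuousOn.mono hsub
  obtain ⟨C, hC⟩ := (isCompact_closedBall (0 : ℂ) R).exists_bound_of_continuousOn hcont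
  refine ⟨C.toNNReal, Convex.lipschitzOnWith_of_nnnorm_deriv_le (𝕜 := ℂ)
    (fun z hz => hG.differentiableAt (isOpen_ball.mem_nhds (hsub hz)))
    (fun z hz => ?_) (convex_closedBall 0 R)⟩
  rw [← NNReal.coe_le_coe, coe_nnnorm]
  exact (hC z hz).trans (Real.le_coe_toNNReal C)

/-- Lipschitz dependence of trajectories on the initial point. -/
lemma IsDiskTrajectory.dist_le {G : ℂ → ℂ} {T : ℝ} {v w : ℝ → ℂ} {K : NNReal} {s : Set ℂ}
    (hK : LipschitzOnWith K G s) (hv : IsDiskTrajectory G T v) (hw : IsDiskTrajectory G T w)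
    (hvs : ∀ t ∈ Icc 0 T, v t ∈ s) (hws : ∀ t ∈ Icc 0 T, w t ∈ s) {t : ℝ} (ht : t ∈ Icc 0 T) :
    dist (v t) (w t) ≤ dist (v 0) (w 0) * Real.exp (K * t) := by
  have := dist_le_of_trajectories_ODE_of_mem (v := fun _ => G) (s := fun _ => s)
    (fun _ _ => hK) hv.continuousOn (fun t ht => hv.hasDerivWithinAt_Ici ht)
    (fun t ht => hvs t (Ico_subset_Icc_self ht)) hw.continuousOn
    (fun t ht => hw.hasDerivWithinAt_Ici ht)
    (fun t ht => hws t (Ico_subset_Icc_self ht)) le_rfl t ht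
  rwa [sub_zero] at this

lemma IsDiskTrajectory.eqOn {G : ℂ → ℂ} (hG : DifferentiableOn ℂ G (ball 0 1))
    (hc : ContractsHyperbolic G) {T : ℝ} {v w : ℝ → ℂ} (hv : IsDiskTrajectory G T v)
    (hw : IsDiskTrajectory G T w) (h0 : v 0 = w 0) : EqOn v w (Icc 0 T) := fun t ht => by
  have hmem := (hv 0 ⟨le_rfl, ht.1.trans ht.2⟩).1
  obtain ⟨R, hR, -, h⟩ := IsDiskTrajectory.exists_radius hG hc (isCompact_singleton (x := v 0))
    (singleton_subset_iff.2 hmem) T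
  obtain ⟨K, hK⟩ := exists_lipschitzOnWith_closedBall hG hR
  have := hv.dist_le hK hw (h T le_rfl v hv rfl) (h T le_rfl w hw h0.symm) ht
  rw [h0, dist_self, zero_mul] at this
  exact dist_le_zero.1 this

lemma LipschitzOnWith.exists_bounded_extend {f : ℂ → ℂ} {s : Set ℂ} {K : NNReal}
    (hf : LipschitzOnWith K f s) {M : ℝ} (hM : ∀ z ∈ s, ‖f z‖ ≤ M) :
    ∃ g : ℂ → ℂ, ∃ K' L : NNReal, LipschitzWith K' g ∧ (∀ z, ‖g z‖ ≤ L) ∧ EqOn f g s := by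
  rcases s.eq_empty_or_nonempty with rfl | ⟨a, ha⟩
  · exact ⟨fun _ => 0, 0, 0, LipschitzWith.const 0, by simp, by simp⟩
  have hM0 : 0 ≤ M := (norm_nonneg _).trans (hM a ha)
  have clamp : ∀ r : ℂ → ℝ, LipschitzOnWith K r s → (∀ z ∈ s, |r z| ≤ M) →
      ∃ u : ℂ → ℝ, LipschitzWith K u ∧ (∀ z, |u z| ≤ M) ∧ EqOn r u s := fun r hr hrM => by
    obtain ⟨u, hu, hue⟩ := hr.extend_real
    refine ⟨fun z => max (-M) (min M (u z)), (hu.const_min M).const_max (-M), fun z => ?_,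
      fun z hz => ?_⟩
    · exact abs_le.2 ⟨le_max_left _ _, max_le (by linarith) (min_le_left _ _)⟩
    · have := abs_le.1 (hrM z hz)
      rw [hue hz] at this ⊢
      simp only
      rw [min_eq_right this.2, max_eq_right this.1]
  obtain ⟨u, hu, huM, hue⟩ := clamp (fun z => (f z).re)
    (LipschitzOnWith.of_dist_le_mul fun x hx y hy => by
      refine le_trans ?_ (hf.dist_le_mul x hx y hy)
      rw [Real.dist_eq, dist_eq_norm, ← sub_re]
      exact abs_re_le_norm _)
    fun z hz => (abs_re_le_norm _).trans (hM z hz)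
  obtain ⟨v, hv, hvM, hve⟩ := clamp (fun z => (f z).im)
    (LipschitzOnWith.of_dist_le_mul fun x hx y hy => by
      refine le_trans ?_ (hf.dist_le_mul x hx y hy)
      rw [Real.dist_eq, dist_eq_norm, ← sub_im]
      exact abs_im_le_norm _)
    fun z hz => (abs_im_le_norm _).trans (hM z hz)
  have hvI : LipschitzWith K fun z => (v z : ℂ) * I :=
    LipschitzWith.of_dist_le_mul fun x y => by
      rw [dist_eq_norm, ← sub_mul, norm_mul, norm_I, mul_one, ← dist_eq_norm,
        isometry_ofReal.dist_eq]
      exact hv.dist_le_mul x y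
  refine ⟨fun z => u z + v z * I, _, (2 * M).toNNReal,
    (isometry_ofReal.lipschitz.comp hu).add hvI, fun z => ?_, fun z hz => ?_⟩
  · rw [Real.coe_toNNReal _ (by linarith)]
    refine (norm_add_le _ _).trans ?_
    rw [norm_mul, norm_I, mul_one, norm_real, norm_real]
    linarith [huM z, hvM z, Real.norm_eq_abs (u z), Real.norm_eq_abs (v z)]
  · simp only
    rw [← hue hz, ← hve hz, re_add_im]

/-- Global existence for the autonomous equation of a bounded Lipschitz field. -/
lemma LipschitzWith.exists_hasDerivWithinAt_Icc {E : Type*} [NormedAddCommGroup E]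
    [NormedSpace ℝ E] [CompleteSpace E] {g : E → E} {K L : NNReal} (hg : LipschitzWith K g)
    (hL : ∀ z, ‖g z‖ ≤ L) (z : E) {T : ℝ} (hT : 0 ≤ T) :
    ∃ w : ℝ → E, w 0 = z ∧ ∀ t ∈ Icc 0 T, HasDerivWithinAt w (g (w t)) (Icc 0 T) t := by
  have hpl : IsPicardLindelof (fun _ => g) (tmin := 0) (tmax := T) ⟨0, le_rfl, hT⟩ z
      (L * T.toNNReal) 0 L K :=
    { lipschitzOnWith := fun _ _ => hg.lipschitzOnWith
      continuousOn := fun _ _ => continuousOn_const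
      norm_le := fun _ _ x _ => hL x
      mul_max_le := by simp [hT] }
  exact hpl.exists_eq_forall_mem_Icc_hasDerivWithinAt₀

lemma exists_isDiskTrajectory {G : ℂ → ℂ} (hG : DifferentiableOn ℂ G (ball 0 1))
    (hc : ContractsHyperbolic G) {z : ℂ} (hz : z ∈ ball (0 : ℂ) 1) {T : ℝ} (hT : 0 ≤ T) :
    ∃ w, w 0 = z ∧ IsDiskTrajectory G T w := by
  obtain ⟨R, hR, hzR, htrap⟩ := IsDiskTrajectory.exists_radius hG hc
    (isCompact_singleton (x := z)) (singleton_subset_iff.2 hz) T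
  obtain ⟨R', hRR', hR'⟩ := exists_between hR
  have hsub : closedBall (0 : ℂ) R' ⊆ ball 0 1 := closedBall_subset_ball hR'
  obtain ⟨K, hK⟩ := exists_lipschitzOnWith_closedBall hG hR'
  obtain ⟨M, hM⟩ := (isCompact_closedBall (0 : ℂ) R').exists_bound_of_continuousOn
    (hG.continuousOn.mono hsub)
  obtain ⟨g, K', L, hg, hgL, hGg⟩ := hK.exists_bounded_extend hM
  obtain ⟨w, hw0, hw⟩ := hg.exists_hasDerivWithinAt_Icc hgL z hT
  have hcont : ContinuousOn (fun t => ‖w t‖) (Icc 0 T) := fun t ht =>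
    (hw t ht).continuousWithinAt.norm
  have htraj : ∀ S ≤ T, (∀ t ∈ Icc 0 S, ‖w t‖ ≤ R') → IsDiskTrajectory G S w :=
    fun S hS h t ht => by
      have hmem : w t ∈ closedBall (0 : ℂ) R' := mem_closedBall_zero_iff.2 (h t ht)
      refine ⟨hsub hmem, ?_⟩
      rw [hGg hmem]
      exact (hw t ⟨ht.1, ht.2.trans hS⟩).mono (Icc_subset_Icc_right hS)
  have hw0R : ‖w 0‖ ≤ R := by simpa [hw0] using hzR
  refine ⟨w, hw0, htraj T le_rfl ?_⟩
  by_contra! hex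
  obtain ⟨t₁, ht₁, ht₁R⟩ := hex
  -- the first time at which the solution meets the circle of radius `R'`
  obtain ⟨t₂, ⟨ht₂, ht₂R⟩, hmin⟩ :=
    (isCompact_Icc.of_isClosed_subset (hcont.preimage_isClosed_of_isClosed isClosed_Icc
      (isClosed_singleton (x := R'))) inter_subset_left).exists_isLeast
    (by
      obtain ⟨s, hs, hsR⟩ := intermediate_value_Icc ht₁.1
        (hcont.mono (Icc_subset_Icc_right ht₁.2)) ⟨hw0R.trans hRR'.le, ht₁R.le⟩
      exact ⟨s, ⟨hs.1, hs.2.trans ht₁.2⟩, hsR⟩)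
  have hbefore : ∀ t ∈ Icc 0 t₂, ‖w t‖ ≤ R' := fun t ht => by
    by_contra! hlt
    obtain ⟨s, hs, hsR⟩ := intermediate_value_Icc ht.1
      (hcont.mono (Icc_subset_Icc_right (ht.2.trans ht₂.2))) ⟨hw0R.trans hRR'.le, hlt.le⟩
    have h1 := hmin ⟨⟨hs.1, hs.2.trans (ht.2.trans ht₂.2)⟩, hsR⟩
    have h2 : s = t := le_antisymm hs.2 (ht.2.trans h1)
    rw [h2] at hsR
    exact hlt.ne' hsR
  have := htrap t₂ ht₂.2 w (htraj t₂ ht₂.2 hbefore) hw0 t₂ ⟨ht₂.1, le_rfl⟩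
  rw [mem_closedBall_zero_iff, show ‖w t₂‖ = R' from ht₂R] at this
  linarith

/-- A vector field contracting the hyperbolic metric has a flow defined for all positive times. -/
lemma exists_forall_isDiskTrajectory {G : ℂ → ℂ} (hG : DifferentiableOn ℂ G (ball 0 1))
    (hc : ContractsHyperbolic G) :
    ∃ φ : ℝ → ℂ → ℂ, ∀ z ∈ ball (0 : ℂ) 1, φ 0 z = z ∧
      ∀ T, IsDiskTrajectory G T fun t => φ t z := by
  have hex : ∀ z : ℂ, ∀ T : ℝ, ∃ w : ℝ → ℂ, z ∈ ball (0 : ℂ) 1 → 0 ≤ T →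
      w 0 = z ∧ IsDiskTrajectory G T w := fun z T => by
    by_cases h : z ∈ ball (0 : ℂ) 1 ∧ 0 ≤ T
    · obtain ⟨w, hw⟩ := exists_isDiskTrajectory hG hc h.1 h.2
      exact ⟨w, fun _ _ => hw⟩
    · exact ⟨0, fun h1 h2 => absurd ⟨h1, h2⟩ h⟩
  choose W hW using hex
  refine ⟨fun t z => W z t t, fun z hz => ⟨(hW z 0 hz le_rfl).1, fun T t ht => ?_⟩⟩
  have hT : 0 ≤ T := ht.1.trans ht.2
  have heq : EqOn (fun t => W z t t) (W z T) (Icc 0 T) := fun s hs => by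
    obtain ⟨h1, h2⟩ := hW z s hz hs.1
    obtain ⟨h3, h4⟩ := hW z T hz hT
    exact h2.eqOn hG hc (h4.mono hs.2) (h1.trans h3.symm) ⟨hs.1, le_rfl⟩
  obtain ⟨h1, h2⟩ := (hW z T hz hT).2 t ht
  simp only
  rw [show W z t t = W z T t from heq ht]
  exact ⟨h1, h2.congr heq (heq ht)⟩

lemma IsDiskTrajectory.comp_const_add {G : ℂ → ℂ} {s t : ℝ} {w : ℝ → ℂ}
    (hw : IsDiskTrajectory G (t + s) w) (ht : 0 ≤ t) :
    IsDiskTrajectory G s fun u => w (t + u) := fun u hu => by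
  have hmem : ∀ u ∈ Icc 0 s, t + u ∈ Icc 0 (t + s) := fun u hu =>
    ⟨add_nonneg ht hu.1, by linarith [hu.2]⟩
  refine ⟨(hw _ (hmem u hu)).1, ?_⟩
  exact ((hw _ (hmem u hu)).2.scomp u ((hasDerivWithinAt_id u (Icc 0 s)).const_add t)
    hmem).congr_deriv (one_smul _ _)

/-- Quadratic Taylor estimate for holomorphic functions on smaller disks. -/
lemma exists_norm_sub_sub_deriv_mul_le {G : ℂ → ℂ} (hG : DifferentiableOn ℂ G (ball 0 1))
    {R : ℝ} (hR : R < 1) : ∃ M, 0 ≤ M ∧ ∀ a ∈ closedBall (0 : ℂ) R, ∀ b ∈ closedBall (0 : ℂ) R,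
      ‖G a - G b - deriv G b * (a - b)‖ ≤ M * ‖a - b‖ ^ 2 := by
  obtain ⟨M, hM⟩ := exists_lipschitzOnWith_closedBall (hG.deriv isOpen_ball) hR
  refine ⟨M, M.2, fun a ha b hb => ?_⟩
  have hseg : segment ℝ b a ⊆ closedBall 0 R := (convex_closedBall 0 R).segment_subset hb ha
  have := (convex_segment b a).norm_image_sub_le_of_norm_hasDerivWithin_le (𝕜 := ℂ)
    (f := fun x => G x - deriv G b * x) (f' := fun x => deriv G x - deriv G b * 1)
    (C := M * ‖a - b‖) (fun x hx =>
      ((hG.differentiableAt (isOpen_ball.mem_nhds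
        (closedBall_subset_ball hR (hseg hx)))).hasDerivAt.sub
        ((hasDerivAt_id x).const_mul (deriv G b))).hasDerivWithinAt)
    (fun x hx => by
      rw [mul_one]
      refine (hM.norm_sub_le (hseg hx) hb).trans ?_
      gcongr
      exact norm_sub_le_of_mem_segment hx)
    (left_mem_segment ℝ b a) (right_mem_segment ℝ b a)
  refine le_trans (le_of_eq ?_) (this.trans_eq (by ring))
  congr 1
  ring

/-- The linearised equation along a trajectory has a solution starting at `1`. -/
lemma IsDiskTrajectory.exists_variation {G : ℂ → ℂ} (hG : DifferentiableOn ℂ G (ball 0 1))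
    (hc : ContractsHyperbolic G) {T : ℝ} (hT : 0 ≤ T) {w : ℝ → ℂ} (hw : IsDiskTrajectory G T w) :
    ∃ v : ℝ → ℂ, v 0 = 1 ∧
      ∀ t ∈ Icc 0 T, HasDerivWithinAt v (deriv G (w t) * v t) (Icc 0 T) t := by
  by_cases h0 : G (w 0) = 0
  · have hmem := (hw 0 ⟨le_rfl, hT⟩).1
    have hconst : EqOn w (fun _ => w 0) (Icc 0 T) := hw.eqOn hG hc
      (fun t _ => ⟨hmem, by simpa only [h0] using hasDerivWithinAt_const t (Icc 0 T) (w 0)⟩) rfl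
    refine ⟨fun t => exp (deriv G (w 0) * t), by simp, fun t ht => ?_⟩
    rw [hconst ht]
    refine HasDerivWithinAt.congr_deriv
      ((((hasDerivAt_id t).ofReal_comp.const_mul (deriv G (w 0))).cexp).hasDerivWithinAt) ?_
    simp [mul_comm]
  · refine ⟨fun t => G (w t) / G (w 0), div_self h0, fun t ht => ?_⟩
    obtain ⟨hmem, hd⟩ := hw t ht
    exact (((hG.differentiableAt (isOpen_ball.mem_nhds hmem)).hasDerivAt.comp_hasDerivWithinAt t
      hd).div_const (G (w 0))).congr_deriv (mul_div_assoc _ _ _)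

lemma gronwallBound_zero_mul (K ε c x : ℝ) :
    gronwallBound 0 K (ε * c) x = gronwallBound 0 K ε x * c := by
  unfold gronwallBound
  split_ifs <;> ring

/-- The flow of a holomorphic field is holomorphic in the initial point. -/
lemma differentiableAt_flow {G : ℂ → ℂ} (hG : DifferentiableOn ℂ G (ball 0 1))
    (hc : ContractsHyperbolic G) {φ : ℝ → ℂ → ℂ} (hφ : ∀ z ∈ ball (0 : ℂ) 1, φ 0 z = z ∧
      ∀ T, IsDiskTrajectory G T fun t => φ t z) {T : ℝ} (hT : 0 ≤ T) {z : ℂ}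
    (hz : z ∈ ball (0 : ℂ) 1) : DifferentiableAt ℂ (φ T) z := by
  obtain ⟨r, hr, hrsub⟩ := nhds_basis_closedBall.mem_iff.1 (isOpen_ball.mem_nhds hz)
  obtain ⟨R, hR, -, htrap⟩ := IsDiskTrajectory.exists_radius hG hc (isCompact_closedBall z r)
    hrsub T
  have hmem : ∀ a ∈ closedBall z r, ∀ t ∈ Icc 0 T, φ t a ∈ closedBall (0 : ℂ) R :=
    fun a ha => htrap T le_rfl _ ((hφ a (hrsub ha)).2 T) (by rwa [(hφ a (hrsub ha)).1])
  have hzr : z ∈ closedBall z r := mem_closedBall_self hr.le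
  obtain ⟨K, hK⟩ := exists_lipschitzOnWith_closedBall hG hR
  obtain ⟨M, hM0, hM⟩ := exists_norm_sub_sub_deriv_mul_le hG hR
  obtain ⟨L, hL⟩ := (isCompact_closedBall (0 : ℂ) R).exists_bound_of_continuousOn
    ((hG.deriv isOpen_ball).continuousOn.mono (closedBall_subset_ball hR))
  have hwz := (hφ z hz).2 T
  obtain ⟨v, hv0, hv⟩ := hwz.exists_variation hG hc hT
  have hbound : ∀ a ∈ closedBall z r, ‖φ T a - φ T z - (a - z) • v T‖ ≤
      gronwallBound 0 L (M * Real.exp (K * T) ^ 2) T * ‖a - z‖ ^ 2 := fun a ha => by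
    have hwa := (hφ a (hrsub ha)).2 T
    have he : ∀ t ∈ Icc 0 T, HasDerivWithinAt (fun t => φ t a - φ t z - (a - z) • v t)
        (G (φ t a) - G (φ t z) - (a - z) • (deriv G (φ t z) * v t)) (Icc 0 T) t := fun t ht =>
      ((hwa t ht).2.sub (hwz t ht).2).sub ((hv t ht).const_smul (a - z))
    have := norm_le_gronwallBound_of_norm_deriv_right_le (δ := 0) (K := L)
      (ε := M * Real.exp (K * T) ^ 2 * ‖a - z‖ ^ 2)
      (fun t ht => (he t ht).continuousWithinAt)
      (fun t ht => (he t (Ico_subset_Icc_self ht)).mono_of_mem_nhdsWithin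
        (Icc_mem_nhdsGE_of_mem ht))
      (by simp [hv0, (hφ a (hrsub ha)).1, (hφ z hz).1])
      (fun t ht => by
        have ht' := Ico_subset_Icc_self ht
        have h1 := hM _ (hmem a ha t ht') _ (hmem z hzr t ht')
        have h2 := hL _ (hmem z hzr t ht')
        have h3 : ‖φ t a - φ t z‖ ≤ ‖a - z‖ * Real.exp (K * T) := by
          have := hwa.dist_le hK hwz (hmem a ha) (hmem z hzr) ht'
          rw [(hφ a (hrsub ha)).1, (hφ z hz).1, dist_eq_norm, dist_eq_norm] at this
          refine this.trans ?_
          have := ht'.2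
          gcongr
        have h4 : M * ‖φ t a - φ t z‖ ^ 2 ≤ M * Real.exp (K * T) ^ 2 * ‖a - z‖ ^ 2 := by
          calc M * ‖φ t a - φ t z‖ ^ 2 ≤ M * (‖a - z‖ * Real.exp (K * T)) ^ 2 := by gcongr
            _ = _ := by ring
        have h5 : G (φ t a) - G (φ t z) - (a - z) • (deriv G (φ t z) * v t) =
            deriv G (φ t z) * (φ t a - φ t z - (a - z) • v t) +
              (G (φ t a) - G (φ t z) - deriv G (φ t z) * (φ t a - φ t z)) := by
          simp only [smul_eq_mul]
          ring
        rw [h5]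
        refine (norm_add_le _ _).trans (add_le_add ?_ (h1.trans h4))
        rw [norm_mul]
        gcongr)
      T ⟨hT, le_rfl⟩
    rwa [sub_zero, gronwallBound_zero_mul] at this
  have hO : (fun a => φ T a - φ T z - (a - z) • v T) =O[nhds z] fun a => ‖a - z‖ ^ 2 := by
    refine Asymptotics.IsBigO.of_bound
      (gronwallBound 0 L (M * Real.exp (K * T) ^ 2) T) ?_
    filter_upwards [closedBall_mem_nhds z hr] with a ha
    rw [Real.norm_of_nonneg (by positivity)]
    exact hbound a ha
  exact (hasDerivAt_iff_isLittleO.2 (hO.trans_isLittleO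
    (Asymptotics.isLittleO_pow_sub_sub z one_lt_two))).differentiableAt

/-- Trajectories are Lipschitz in time, with constant the initial hyperbolic speed. -/
lemma IsDiskTrajectory.dist_le_hyperbolicSpeed_mul {G : ℂ → ℂ} (hG : DifferentiableOn ℂ G (ball 0 1))
    (hc : ContractsHyperbolic G) {T : ℝ} {w : ℝ → ℂ} (hw : IsDiskTrajectory G T w) {s t : ℝ}
    (hs : s ∈ Icc 0 T) (ht : t ∈ Icc 0 T) :
    dist (w s) (w t) ≤ hyperbolicSpeed G (w 0) * dist s t := by
  rw [dist_eq_norm, dist_eq_norm]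
  refine (convex_Icc 0 T).norm_image_sub_le_of_norm_hasDerivWithin_le
    (fun u hu => (hw u hu).2) (fun u hu => ?_) ht hs
  refine (hw.norm_field_le hG hc hu).trans (mul_le_of_le_one_right ?_ ?_)
  · exact hyperbolicSpeed_nonneg G (hw 0 ⟨le_rfl, hu.1.trans hu.2⟩).1
  · linarith [sq_nonneg ‖w u‖]

lemma tendstoLocallyUniformlyOn_flow {G : ℂ → ℂ} (hG : DifferentiableOn ℂ G (ball 0 1))
    (hc : ContractsHyperbolic G) {φ : ℝ → ℂ → ℂ} (hφ : ∀ z ∈ ball (0 : ℂ) 1, φ 0 z = z ∧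
      ∀ T, IsDiskTrajectory G T fun t => φ t z) {t₀ : ℝ} (ht₀ : 0 ≤ t₀) :
    TendstoLocallyUniformlyOn (fun t => φ t) (φ t₀) (nhdsWithin t₀ (Ici 0)) (ball 0 1) := by
  rw [Metric.tendstoLocallyUniformlyOn_iff]
  intro ε hε x hx
  set C := hyperbolicSpeed G x + 1
  have hC : 0 < C := by linarith [hyperbolicSpeed_nonneg G hx]
  refine ⟨{y | y ∈ ball (0 : ℂ) 1 ∧ hyperbolicSpeed G y < C}, ?_, ?_⟩
  · exact Filter.inter_mem self_mem_nhdsWithin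
      ((continuousOn_hyperbolicSpeed hG x hx).eventually (gt_mem_nhds (lt_add_one _)))
  · have hball : ball t₀ (ε / C) ∈ nhdsWithin t₀ (Ici 0) :=
      mem_nhdsWithin_of_mem_nhds (ball_mem_nhds _ (by positivity))
    filter_upwards [hball, self_mem_nhdsWithin] with t ht ht0 y hy
    obtain ⟨hy0, hyT⟩ := hφ y hy.1
    have := (hyT (max t₀ t)).dist_le_hyperbolicSpeed_mul hG hc ⟨ht₀, le_max_left _ _⟩ ⟨ht0, le_max_right _ _⟩
    simp only [hy0] at this
    refine this.trans_lt ?_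
    rw [mem_ball, dist_comm, lt_div_iff₀ hC] at ht
    calc hyperbolicSpeed G y * dist t₀ t ≤ C * dist t₀ t := by gcongr; exact hy.2.le
      _ < ε := by linarith

/-- Berkson–Porta theorem (generation direction): if `τ` lies in the closed unit disk
and `p : 𝔻 → ℂ` is holomorphic with `Re p ≥ 0`, then `G(z) = (z−τ)(conj(τ)z−1)p(z)` is
semicomplete: for every `z ∈ 𝔻` the initial value problem `w' = G(w)`, `w 0 = z` has a
unique solution `w_z : [0,∞) → 𝔻`, and `φ_t(z) := w_z(t)` is a one-parameter semigroup
of holomorphic self-maps of `𝔻` (each `φ_t` holomorphic `𝔻 → 𝔻`, `φ₀ = id`,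
`φ_{t+s} = φ_s ∘ φ_t`, and `t ↦ φ_t` continuous for locally uniform convergence). -/
theorem berkson_porta_generation (τ : ℂ) (hτ : τ ∈ Metric.closedBall (0 : ℂ) 1)
    (p : ℂ → ℂ) (hp : DifferentiableOn ℂ p (Metric.ball 0 1))
    (hre : ∀ z ∈ Metric.ball (0 : ℂ) 1, 0 ≤ (p z).re) :
    ∃ φ : ℝ → ℂ → ℂ,
      -- each `φ_t` is a holomorphic self-map of the disk
      (∀ t : ℝ, 0 ≤ t → Set.MapsTo (φ t) (Metric.ball 0 1) (Metric.ball 0 1) ∧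
        DifferentiableOn ℂ (φ t) (Metric.ball 0 1)) ∧
      -- `φ₀ = id`
      (∀ z ∈ Metric.ball (0 : ℂ) 1, φ 0 z = z) ∧
      -- semigroup property `φ_{t+s} = φ_s ∘ φ_t`
      (∀ s t : ℝ, 0 ≤ s → 0 ≤ t → ∀ z ∈ Metric.ball (0 : ℂ) 1,
        φ (t + s) z = φ s (φ t z)) ∧
      -- continuity of `t ↦ φ_t` for locally uniform convergence
      (∀ t₀ : ℝ, 0 ≤ t₀ → TendstoLocallyUniformlyOn (fun t => φ t) (φ t₀)
        (nhdsWithin t₀ (Set.Ici 0)) (Metric.ball 0 1)) ∧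
      -- `t ↦ φ_t z` solves `w' = G(w)`, `w 0 = z`
      (∀ z ∈ Metric.ball (0 : ℂ) 1, ∀ t : ℝ, 0 ≤ t →
        HasDerivWithinAt (fun u => φ u z) (berksonPortaField τ p (φ t z)) (Set.Ici 0) t) ∧
      -- uniqueness of the solution
      (∀ z ∈ Metric.ball (0 : ℂ) 1, ∀ w : ℝ → ℂ,
        (∀ t : ℝ, 0 ≤ t → w t ∈ Metric.ball (0 : ℂ) 1) → w 0 = z →
        (∀ t : ℝ, 0 ≤ t →
          HasDerivWithinAt w (berksonPortaField τ p (w t)) (Set.Ici 0) t) →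
        ∀ t : ℝ, 0 ≤ t → w t = φ t z) := by
  have hG := differentiableOn_berksonPortaField τ hp
  have hc : ContractsHyperbolic (berksonPortaField τ p) := fun z hz =>
    re_berksonPortaField_le τ hp hre hz
  obtain ⟨φ, hφ⟩ := exists_forall_isDiskTrajectory hG hc
  have hmaps : ∀ t : ℝ, 0 ≤ t → MapsTo (φ t) (ball 0 1) (ball 0 1) := fun t ht z hz =>
    ((hφ z hz).2 t t ⟨ht, le_rfl⟩).1
  refine ⟨φ, fun t ht => ⟨hmaps t ht, fun z hz =>
      (differentiableAt_flow hG hc hφ ht hz).differentiableWithinAt⟩,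
    fun z hz => (hφ z hz).1, fun s t hs ht z hz => ?_,
    fun t₀ ht₀ => tendstoLocallyUniformlyOn_flow hG hc hφ ht₀, fun z hz t ht => ?_,
    fun z hz w hw hw0 hwd t ht => ?_⟩
  · obtain ⟨h0, h⟩ := hφ _ (hmaps t ht hz)
    exact (((hφ z hz).2 (t + s)).comp_const_add ht).eqOn hG hc (h s)
      (by simp only [add_zero, h0]) ⟨hs, le_rfl⟩
  · refine ((hφ z hz).2 (t + 1) t ⟨ht, by linarith⟩).2.mono_of_mem_nhdsWithin ?_
    rw [← Ici_inter_Iic]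
    exact Filter.inter_mem self_mem_nhdsWithin
      (mem_nhdsWithin_of_mem_nhds (Iic_mem_nhds (lt_add_one t)))
  · have hwt : IsDiskTrajectory (berksonPortaField τ p) t w := fun s hs =>
      ⟨hw s hs.1, (hwd s hs.1).mono Icc_subset_Ici_self⟩
    exact hwt.eqOn hG hc ((hφ z hz).2 t) (hw0.trans (hφ z hz).1.symm) ⟨ht, le_rfl⟩

end
end

section
/- Berkson–Porta theorem (representation direction): let (φ_t)_{t≥0} be a one-parameter semigroup of holomorphic self-maps of 𝔻. Then there exist a point τ of the closed unit disk and a holomorphic function p : 𝔻 → ℂ with Re p ≥ 0 on 𝔻 such that, for every z ∈ 𝔻, the map t ↦ φ_t(z) is differentiable on [0, ∞) and satisfies ∂φ_t(z)/∂t = G(φ_t(z)), where G(w) = (w − τ)(conj(τ)·w − 1)·p(w). -/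
open Complex Metric Set

noncomputable section

open Filter Topology ComplexConjugate

theorem one_sub_conj_mul_ne_zero {a z : ℂ} (ha : ‖a‖ ≤ 1) (hz : ‖z‖ < 1) :
    1 - conj a * z ≠ 0 := by
  intro h
  have h1 : ‖conj a * z‖ < 1 := by
    rw [norm_mul, Complex.norm_conj]
    nlinarith [norm_nonneg a, norm_nonneg z]
  rw [← sub_eq_zero.mp h] at h1
  simp at h1

theorem normSq_one_sub_conj_mul_sub (a z : ℂ) :
    normSq (1 - conj a * z) - normSq (z - a) = (1 - normSq a) * (1 - normSq z) := by
  simp only [normSq_apply, sub_re, sub_im, mul_re, mul_im, conj_re, conj_im, one_re, one_im]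
  ring

theorem normSq_lt_one_of_norm_lt_one {z : ℂ} (hz : ‖z‖ < 1) : normSq z < 1 := by
  rw [normSq_eq_norm_sq]
  nlinarith [norm_nonneg z]

theorem norm_moebius_lt_one {a z : ℂ} (ha : ‖a‖ < 1) (hz : ‖z‖ < 1) :
    ‖(z - a) / (1 - conj a * z)‖ < 1 := by
  have hpos : 0 < ‖1 - conj a * z‖ := norm_pos_iff.mpr (one_sub_conj_mul_ne_zero ha.le hz)
  rw [norm_div, div_lt_one hpos]
  refine lt_of_pow_lt_pow_left₀ 2 hpos.le ?_
  rw [← normSq_eq_norm_sq, ← normSq_eq_norm_sq]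
  nlinarith [normSq_one_sub_conj_mul_sub a z, normSq_lt_one_of_norm_lt_one ha,
    normSq_lt_one_of_norm_lt_one hz]

theorem differentiableOn_moebius {a : ℂ} (ha : ‖a‖ < 1) :
    DifferentiableOn ℂ (fun z => (z - a) / (1 - conj a * z)) (ball 0 1) := by
  refine DifferentiableOn.div (by fun_prop) (by fun_prop) fun z hz => ?_
  exact one_sub_conj_mul_ne_zero ha.le (by simpa using hz)

/-- The **Schwarz–Pick lemma** for holomorphic self-maps of the unit disk. -/
theorem schwarz_pick {f : ℂ → ℂ} (hd : DifferentiableOn ℂ f (ball 0 1))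
    (hm : MapsTo f (ball 0 1) (ball 0 1)) {z w : ℂ} (hz : z ∈ ball (0 : ℂ) 1)
    (hw : w ∈ ball (0 : ℂ) 1) :
    normSq (f z - f w) * normSq (1 - conj w * z) ≤
      normSq (z - w) * normSq (1 - conj (f w) * f z) := by
  have hfz := hm hz
  have hfw := hm hw
  rw [mem_ball_zero_iff] at hz hw hfz hfw
  have hw' : ‖-w‖ < 1 := by rwa [norm_neg]
  set M : ℂ → ℂ := fun ζ => (ζ - -w) / (1 - conj (-w) * ζ) with hM
  set N : ℂ → ℂ := fun ζ => (ζ - f w) / (1 - conj (f w) * ζ) with hN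
  have hMm : MapsTo M (ball 0 1) (ball 0 1) := fun ζ hζ => by
    rw [mem_ball_zero_iff] at hζ ⊢
    exact norm_moebius_lt_one hw' hζ
  have hNm : MapsTo N (ball 0 1) (ball 0 1) := fun ζ hζ => by
    rw [mem_ball_zero_iff] at hζ ⊢
    exact norm_moebius_lt_one hfw hζ
  have hdh : DifferentiableOn ℂ (N ∘ f ∘ M) (ball 0 1) :=
    (differentiableOn_moebius hfw).comp (hd.comp (differentiableOn_moebius hw') hMm) (hm.comp hMm)
  have h0 : (N ∘ f ∘ M) 0 = 0 := by simp [hM, hN]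
  have hB := one_sub_conj_mul_ne_zero hw.le hz
  have hB' := one_sub_conj_mul_ne_zero hfw.le hfz
  have hζ := norm_moebius_lt_one hw hz
  have hW : 1 - conj w * w ≠ 0 := one_sub_conj_mul_ne_zero hw.le hw
  have hMz : M ((z - w) / (1 - conj w * z)) = z := by
    have e1 : (z - w) / (1 - conj w * z) - -w = z * (1 - conj w * w) / (1 - conj w * z) := by
      rw [eq_div_iff hB, sub_mul, div_mul_cancel₀ _ hB]
      ring
    have e2 : 1 - conj (-w) * ((z - w) / (1 - conj w * z)) =
        (1 - conj w * w) / (1 - conj w * z) := by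
      rw [map_neg, eq_div_iff hB, sub_mul, mul_assoc, div_mul_cancel₀ _ hB]
      ring
    simp only [hM]
    rw [e1, e2, div_div_div_cancel_right₀ hB, mul_div_cancel_right₀ _ hW]
  have key := norm_le_norm_of_mapsTo_ball hdh
    ((hNm.comp (hm.comp hMm)).mono_right ball_subset_closedBall) h0 hζ
  simp only [Function.comp_apply, hMz, hN, norm_div] at key
  rw [div_le_div_iff₀ (norm_pos_iff.mpr hB') (norm_pos_iff.mpr hB)] at key
  simp only [normSq_eq_norm_sq]
  rw [← mul_pow, ← mul_pow]
  exact pow_le_pow_left₀ (by positivity) key 2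

/-- A holomorphic function without zeros in the unit disk takes, on each circle centred at the
origin, a value that is a positive multiple of the point at which it is taken. -/
theorem exists_eq_mul_of_ne_zero {G : ℂ → ℂ} (hG : ContinuousOn G (ball 0 1))
    (h0 : ∀ z ∈ ball (0 : ℂ) 1, G z ≠ 0) {r : ℝ} (hr0 : 0 < r) (hr1 : r < 1) :
    ∃ w : ℂ, ‖w‖ = r ∧ ∃ ε : ℝ, 0 ≤ ε ∧ G w = ε * w := by
  have hsc : IsSimplyConnected (ball (0 : ℂ) 1) := by
    have := (convex_ball (0 : ℂ) 1).contractibleSpace ⟨0, by simp⟩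
    exact inferInstanceAs (SimplyConnectedSpace (ball (0 : ℂ) 1))
  obtain ⟨g, hg, hge⟩ := exists_continuousOn_eqOn_exp_comp hsc isOpen_ball hG
    (by rintro ⟨z, hz, h⟩; exact h0 z hz h)
  set c : ℝ → ℂ := fun θ => r * exp (θ * I) with hc
  have hcn : ∀ θ, ‖c θ‖ = r := fun θ => by
    simp [hc, Complex.norm_exp_ofReal_mul_I, abs_of_pos hr0]
  have hcm : ∀ θ, c θ ∈ ball (0 : ℂ) 1 := fun θ => by
    rw [mem_ball_zero_iff, hcn]
    exact hr1
  set a : ℝ → ℝ := fun θ => (g (c θ)).im - θ with ha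
  have hac : Continuous a := by
    have : Continuous fun θ => g (c θ) := hg.comp_continuous (by fun_prop) hcm
    exact (Complex.continuous_im.comp this).sub continuous_id
  have hc2 : c (2 * Real.pi) = c 0 := by simp [hc]
  have ha2 : a (2 * Real.pi) = a 0 - 2 * Real.pi := by simp [ha, hc2]
  obtain ⟨n, hn⟩ : ∃ n : ℤ, (n : ℝ) * (2 * Real.pi) ∈ Icc (a (2 * Real.pi)) (a 0) := by
    refine ⟨⌊a 0 / (2 * Real.pi)⌋, ?_, ?_⟩
    · have := Int.lt_floor_add_one (a 0 / (2 * Real.pi))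
      rw [div_lt_iff₀ Real.two_pi_pos] at this
      linarith
    · have := Int.floor_le (a 0 / (2 * Real.pi))
      rwa [le_div_iff₀ Real.two_pi_pos] at this
  obtain ⟨θ, -, hθ⟩ := intermediate_value_Icc' Real.two_pi_pos.le hac.continuousOn hn
  refine ⟨c θ, hcn θ, Real.exp (g (c θ)).re / r, by positivity, ?_⟩
  have him : (g (c θ)).im = θ + n * (2 * Real.pi) := by
    simp only [ha] at hθ
    linarith
  rw [← hge (hcm θ)]
  have hgd : g (c θ) = ((g (c θ)).re : ℂ) + (θ * I + n * (2 * Real.pi * I)) := by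
    apply Complex.ext <;> simp [him]
  have hr : (r : ℂ) ≠ 0 := by exact_mod_cast hr0.ne'
  simp only [Function.comp_apply]
  conv_lhs => rw [hgd]
  rw [exp_add, exp_add, exp_int_mul_two_pi_mul_I, mul_one]
  simp only [hc]
  push_cast
  field_simp

theorem nonneg_of_hasDerivWithinAt_Ici {f : ℝ → ℝ} {f' a : ℝ}
    (hf : HasDerivWithinAt f f' (Ici a) a) (ha : ∀ t, a ≤ t → f a ≤ f t) : 0 ≤ f' := by
  rw [hasDerivWithinAt_iff_tendsto_slope, Ici_sdiff_left] at hf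
  refine ge_of_tendsto hf ?_
  filter_upwards [self_mem_nhdsWithin] with t ht
  rw [slope_def_field]
  exact div_nonneg (sub_nonneg.mpr (ha t (le_of_lt ht))) (sub_nonneg.mpr (le_of_lt ht))

/-- The infinitesimal form of the Schwarz–Pick lemma, at a point `w` at which the generator is
a nonnegative multiple of `w`. -/
theorem re_generator_mul_conj_nonpos {φ : ℝ → ℂ → ℂ} {G : ℂ → ℂ}
    (hmaps : ∀ t : ℝ, 0 ≤ t → MapsTo (φ t) (ball (0 : ℂ) 1) (ball 0 1))
    (hhol : ∀ t : ℝ, 0 ≤ t → DifferentiableOn ℂ (φ t) (ball 0 1))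
    (hid : ∀ z ∈ ball (0 : ℂ) 1, φ 0 z = z)
    (hG : ∀ z ∈ ball (0 : ℂ) 1, HasDerivWithinAt (fun u => φ u z) (G z) (Ici 0) 0)
    {z w : ℂ} (hz : z ∈ ball (0 : ℂ) 1) (hw : w ∈ ball (0 : ℂ) 1) {ε : ℝ} (hε : 0 ≤ ε)
    (hGw : G w = ε * w) (h : ε = 0 ∨ ‖z‖ ≤ ‖w‖) :
    (G z * conj ((z - w) * (1 - conj w * z))).re ≤ 0 := by
  have hzd := hG z hz
  have hwd := hG w hw
  rw [hGw] at hwd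
  have hD := (((hwd.star.mul hzd).const_sub 1).norm_sq.const_mul (‖z - w‖ ^ 2)).sub
    ((hzd.sub hwd).norm_sq.mul_const (‖1 - conj w * z‖ ^ 2))
  have hD0 := nonneg_of_hasDerivWithinAt_Ici hD fun t ht => by
    have := schwarz_pick (hhol t ht) (hmaps t ht) hz hw
    simp only [normSq_eq_norm_sq] at this
    simp only [Pi.sub_apply, Pi.mul_apply, hid z hz, hid w hw, star_def]
    linarith
  simp only [Pi.sub_apply, Pi.mul_apply, hid z hz, hid w hw, star_def,
    Complex.inner, ← normSq_eq_norm_sq] at hD0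
  have hw1 : 0 < 1 - normSq w := by
    rw [mem_ball_zero_iff] at hw
    rw [normSq_eq_norm_sq]
    nlinarith [norm_nonneg w]
  have hz1 : 0 < 1 - normSq z := by
    rw [mem_ball_zero_iff] at hz
    rw [normSq_eq_norm_sq]
    nlinarith [norm_nonneg z]
  have hE : 0 ≤ ε * ((1 - normSq z) *
      ((conj w * z).re * (1 + normSq w) - normSq w * (1 + normSq z))) -
      (1 - normSq w) * (G z * conj ((z - w) * (1 - conj w * z))).re := by
    refine (div_nonneg hD0 zero_le_two).trans_eq ?_
    simp only [normSq_apply, mul_re, mul_im, sub_re, sub_im, add_re, add_im, neg_re, neg_im, conj_re,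
      conj_im, one_re, one_im, ofReal_re, ofReal_im, map_sub, map_mul, map_one, conj_conj, conj_ofReal]
    ring
  have hR : ε * ((1 - normSq z) *
      ((conj w * z).re * (1 + normSq w) - normSq w * (1 + normSq z))) ≤ 0 := by
    rcases h with rfl | h
    · simp
    · refine mul_nonpos_of_nonneg_of_nonpos hε (mul_nonpos_of_nonneg_of_nonpos hz1.le ?_)
      have hc : (conj w * z).re ≤ ‖w‖ * ‖z‖ := by
        simpa using Complex.re_le_norm (conj w * z)
      rw [mem_ball_zero_iff] at hz hw
      simp only [normSq_eq_norm_sq]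
      have h1 : 0 ≤ (‖w‖ - ‖z‖) * (1 - ‖w‖ * ‖z‖) :=
        mul_nonneg (by linarith) (by nlinarith [norm_nonneg w, norm_nonneg z])
      nlinarith [mul_nonneg (norm_nonneg w) h1,
        mul_le_mul_of_nonneg_right hc (by positivity : 0 ≤ 1 + ‖w‖ ^ 2)]
  by_contra hcon
  push Not at hcon
  linarith [mul_pos hw1 hcon]

theorem continuous_orbit_abs {φ : ℝ → ℂ → ℂ}
    (hcont : ∀ t₀ : ℝ, 0 ≤ t₀ → TendstoLocallyUniformlyOn (fun t => φ t) (φ t₀)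
      (𝓝[Ici 0] t₀) (ball 0 1)) {z : ℂ} (hz : z ∈ ball (0 : ℂ) 1) :
    Continuous fun s : ℝ => φ |s| z := by
  have : ContinuousOn (fun s => φ s z) (Ici 0) := fun t ht => (hcont t ht).tendsto_at hz
  exact this.comp_continuous continuous_abs abs_nonneg

theorem continuous_deriv_abs {φ : ℝ → ℂ → ℂ}
    (hhol : ∀ t : ℝ, 0 ≤ t → DifferentiableOn ℂ (φ t) (ball 0 1))
    (hcont : ∀ t₀ : ℝ, 0 ≤ t₀ → TendstoLocallyUniformlyOn (fun t => φ t) (φ t₀)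
      (𝓝[Ici 0] t₀) (ball 0 1)) {z : ℂ} (hz : z ∈ ball (0 : ℂ) 1) :
    Continuous fun s : ℝ => deriv (φ |s|) z := by
  have : ContinuousOn (fun s => deriv (φ s) z) (Ici 0) := fun t ht =>
    ((hcont t ht).deriv (eventually_mem_nhdsWithin.mono hhol) isOpen_ball).tendsto_at hz
  exact this.comp_continuous continuous_abs abs_nonneg

/-- The averages of a semigroup over `[0, h]` are holomorphic. -/
theorem hasDerivAt_integral_semigroup {φ : ℝ → ℂ → ℂ}
    (hmaps : ∀ t : ℝ, 0 ≤ t → MapsTo (φ t) (ball (0 : ℂ) 1) (ball 0 1))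
    (hhol : ∀ t : ℝ, 0 ≤ t → DifferentiableOn ℂ (φ t) (ball 0 1))
    (hcont : ∀ t₀ : ℝ, 0 ≤ t₀ → TendstoLocallyUniformlyOn (fun t => φ t) (φ t₀)
      (𝓝[Ici 0] t₀) (ball 0 1)) (h : ℝ) {z : ℂ} (hz : z ∈ ball (0 : ℂ) 1) :
    HasDerivAt (fun w => ∫ s in (0 : ℝ)..h, φ |s| w) (∫ s in (0 : ℝ)..h, deriv (φ |s|) z) z := by
  obtain ⟨δ, hδ, hδb⟩ := Metric.isOpen_iff.mp isOpen_ball z hz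
  have hsub : ∀ x ∈ ball z (δ / 2), ball x (δ / 2) ⊆ ball (0 : ℂ) 1 := fun x hx =>
    (ball_subset_ball' (by rw [mem_ball] at hx; linarith)).trans hδb
  refine (intervalIntegral.hasDerivAt_integral_of_dominated_loc_of_deriv_le
    (F' := fun w s => deriv (φ |s|) w) (bound := fun _ => 2 / (δ / 2))
    (ball_mem_nhds z (half_pos hδ)) ?_ ?_ ?_ ?_ ?_ ?_).2
  · filter_upwards [isOpen_ball.mem_nhds hz] with w hw
    exact (continuous_orbit_abs hcont hw).aestronglyMeasurable
  · exact (continuous_orbit_abs hcont hz).intervalIntegrable _ _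
  · exact (continuous_deriv_abs hhol hcont hz).aestronglyMeasurable
  · refine .of_forall fun s _ x hx => ?_
    refine norm_deriv_le_div_of_mapsTo_ball ((hhol _ (abs_nonneg s)).mono (hsub x hx)) ?_
      (half_pos hδ)
    intro y hy
    have h1 := hmaps _ (abs_nonneg s) (hsub x hx hy)
    have h2 := hmaps _ (abs_nonneg s) (hsub x hx (mem_ball_self (half_pos hδ)))
    rw [mem_ball] at h1 h2
    rw [mem_closedBall]
    linarith [dist_triangle_right (φ |s| y) (φ |s| x) 0]
  · exact intervalIntegrable_const
  · refine .of_forall fun s _ x hx => ?_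
    exact ((hhol _ (abs_nonneg s)).differentiableAt
      (isOpen_ball.mem_nhds (hsub x hx (mem_ball_self (half_pos hδ))))).hasDerivAt

theorem exists_integral_deriv_ne_zero {φ : ℝ → ℂ → ℂ}
    (hhol : ∀ t : ℝ, 0 ≤ t → DifferentiableOn ℂ (φ t) (ball 0 1))
    (hid : ∀ z ∈ ball (0 : ℂ) 1, φ 0 z = z)
    (hcont : ∀ t₀ : ℝ, 0 ≤ t₀ → TendstoLocallyUniformlyOn (fun t => φ t) (φ t₀)
      (𝓝[Ici 0] t₀) (ball 0 1)) {z : ℂ} (hz : z ∈ ball (0 : ℂ) 1) :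
    ∃ h : ℝ, 0 < h ∧ ∫ s in (0 : ℝ)..h, deriv (φ |s|) z ≠ 0 := by
  have hc := continuous_deriv_abs hhol hcont hz
  have h1 : deriv (φ |(0 : ℝ)|) z = 1 := by
    have : φ |(0 : ℝ)| =ᶠ[𝓝 z] id := by
      filter_upwards [isOpen_ball.mem_nhds hz] with w hw
      simp [hid w hw]
    rw [this.deriv_eq, deriv_id]
  have hd := intervalIntegral.integral_hasDerivAt_right (hc.intervalIntegrable 0 0)
    (hc.stronglyMeasurableAtFilter _ _) hc.continuousAt
  rw [h1] at hd
  have hne : ∀ᶠ u in 𝓝[≠] (0 : ℝ), ∫ s in (0 : ℝ)..u, deriv (φ |s|) z ≠ 0 :=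
    hd.eventually_ne one_ne_zero
  have hne' : ∀ᶠ u in 𝓝[>] (0 : ℝ), ∫ s in (0 : ℝ)..u, deriv (φ |s|) z ≠ 0 :=
    hne.filter_mono (nhdsWithin_mono _ fun x hx => (ne_of_gt hx))
  obtain ⟨u, hu, hu0⟩ := (hne'.and self_mem_nhdsWithin).exists
  exact ⟨u, hu0, hu⟩

/-- Orbits are differentiable wherever the average over `[0, h]` is locally invertible. -/
theorem hasDerivWithinAt_semigroup {φ : ℝ → ℂ → ℂ}
    (hmaps : ∀ t : ℝ, 0 ≤ t → MapsTo (φ t) (ball (0 : ℂ) 1) (ball 0 1))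
    (hhol : ∀ t : ℝ, 0 ≤ t → DifferentiableOn ℂ (φ t) (ball 0 1))
    (hsg : ∀ s t : ℝ, 0 ≤ s → 0 ≤ t → ∀ z ∈ ball (0 : ℂ) 1, φ (t + s) z = φ s (φ t z))
    (hcont : ∀ t₀ : ℝ, 0 ≤ t₀ → TendstoLocallyUniformlyOn (fun t => φ t) (φ t₀)
      (𝓝[Ici 0] t₀) (ball 0 1)) {h : ℝ} (hh : 0 < h) {z : ℂ} (hz : z ∈ ball (0 : ℂ) 1)
    {t : ℝ} (ht : 0 ≤ t) (hne : ∫ s in (0 : ℝ)..h, deriv (φ |s|) (φ t z) ≠ 0) :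
    HasDerivWithinAt (fun u => φ u z)
      ((φ h (φ t z) - φ t z) / ∫ s in (0 : ℝ)..h, deriv (φ |s|) (φ t z)) (Ici 0) t := by
  set Ψ : ℂ → ℂ := fun w => ∫ s in (0 : ℝ)..h, φ |s| w with hΨ
  have hΨd : ∀ w ∈ ball (0 : ℂ) 1, HasDerivAt Ψ (∫ s in (0 : ℝ)..h, deriv (φ |s|) w) w :=
    fun w hw => hasDerivAt_integral_semigroup hmaps hhol hcont h hw
  have hw := hmaps t ht hz
  have hΨan : AnalyticAt ℂ Ψ (φ t z) :=
    DifferentiableOn.analyticAt (fun w hw => (hΨd w hw).differentiableAt.differentiableWithinAt)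
      (isOpen_ball.mem_nhds hw)
  have hs := hΨan.hasStrictDerivAt
  rw [(hΨd _ hw).deriv] at hs
  have hc := continuous_orbit_abs hcont hz
  have hii : ∀ a b : ℝ, IntervalIntegrable (fun s => φ |s| z) MeasureTheory.volume a b :=
    fun a b => hc.intervalIntegrable a b
  have hF : ∀ u ∈ Ici (0 : ℝ), Ψ (φ u z) =
      (∫ s in (0 : ℝ)..(u + h), φ |s| z) - ∫ s in (0 : ℝ)..u, φ |s| z := by
    intro u hu
    rw [intervalIntegral.integral_interval_sub_left (hii _ _) (hii _ _)]
    have : ∫ s in u..(u + h), φ |s| z = ∫ s in (0 : ℝ)..h, φ |u + s| z := by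
      rw [intervalIntegral.integral_comp_add_left (fun s => φ |s| z) u, add_zero]
    rw [this]
    refine intervalIntegral.integral_congr fun s hs => ?_
    rw [uIcc_of_le hh.le] at hs
    rw [abs_of_nonneg hs.1, abs_of_nonneg (add_nonneg hu hs.1), hsg s u hs.1 hu z hz]
  have hprim : ∀ u : ℝ, HasDerivAt (fun u => ∫ s in (0 : ℝ)..u, φ |s| z) (φ |u| z) u := fun u =>
    intervalIntegral.integral_hasDerivAt_right (hii _ _) (hc.stronglyMeasurableAtFilter _ _)
      hc.continuousAt
  have hFd : HasDerivWithinAt (fun u => Ψ (φ u z)) (φ h (φ t z) - φ t z) (Ici 0) t := by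
    have h1 := ((hprim (t + h)).comp_add_const t h).sub (hprim t)
    rw [abs_of_nonneg ht, abs_of_nonneg (by linarith), hsg h t hh.le ht z hz] at h1
    exact h1.hasDerivWithinAt.congr hF (hF t ht)
  have hinv := (hs.to_localInverse hne).hasDerivAt
  have hcomp := hinv.scomp_hasDerivWithinAt t hFd
  rw [div_eq_mul_inv]
  have hev : ∀ᶠ u in 𝓝[Ici 0] t, φ u z = (hs.localInverse Ψ _ _ hne ∘ fun u => Ψ (φ u z)) u :=
    (((hcont t ht).tendsto_at hz).eventually (hs.eventually_left_inverse hne)).mono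
      fun u hu => hu.symm
  exact hcomp.congr_of_eventuallyEq hev (hev.self_of_nhdsWithin ht)

/-- The orbits of a semigroup solve an autonomous equation with holomorphic right-hand side. -/
theorem exists_generator {φ : ℝ → ℂ → ℂ}
    (hmaps : ∀ t : ℝ, 0 ≤ t → MapsTo (φ t) (ball (0 : ℂ) 1) (ball 0 1))
    (hhol : ∀ t : ℝ, 0 ≤ t → DifferentiableOn ℂ (φ t) (ball 0 1))
    (hid : ∀ z ∈ ball (0 : ℂ) 1, φ 0 z = z)
    (hsg : ∀ s t : ℝ, 0 ≤ s → 0 ≤ t → ∀ z ∈ ball (0 : ℂ) 1, φ (t + s) z = φ s (φ t z))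
    (hcont : ∀ t₀ : ℝ, 0 ≤ t₀ → TendstoLocallyUniformlyOn (fun t => φ t) (φ t₀)
      (𝓝[Ici 0] t₀) (ball 0 1)) :
    ∃ G : ℂ → ℂ, DifferentiableOn ℂ G (ball 0 1) ∧ ∀ z ∈ ball (0 : ℂ) 1, ∀ t : ℝ, 0 ≤ t →
      HasDerivWithinAt (fun u => φ u z) (G (φ t z)) (Ici 0) t := by
  set G : ℂ → ℂ := fun z => derivWithin (fun u => φ u z) (Ici 0) 0 with hGdef
  have hG : ∀ h : ℝ, 0 < h → ∀ w ∈ ball (0 : ℂ) 1, ∫ s in (0 : ℝ)..h, deriv (φ |s|) w ≠ 0 →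
      G w = (φ h w - w) / ∫ s in (0 : ℝ)..h, deriv (φ |s|) w := by
    intro h hh w hw hne
    have := hasDerivWithinAt_semigroup hmaps hhol hsg hcont hh hw le_rfl
      (by rwa [hid w hw])
    rw [hid w hw] at this
    exact this.derivWithin (uniqueDiffWithinAt_Ici 0)
  refine ⟨G, fun z hz => ?_, fun z hz t ht => ?_⟩
  · obtain ⟨h, hh, hne⟩ := exists_integral_deriv_ne_zero hhol hid hcont hz
    set Ψ : ℂ → ℂ := fun w => ∫ s in (0 : ℝ)..h, φ |s| w with hΨ
    have hΨd : ∀ w ∈ ball (0 : ℂ) 1, HasDerivAt Ψ (∫ s in (0 : ℝ)..h, deriv (φ |s|) w) w :=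
      fun w hw => hasDerivAt_integral_semigroup hmaps hhol hcont h hw
    have hΨ' : DifferentiableAt ℂ (deriv Ψ) z :=
      (DifferentiableOn.analyticAt
        (fun w hw => (hΨd w hw).differentiableAt.differentiableWithinAt)
        (isOpen_ball.mem_nhds hz)).deriv.differentiableAt
    rw [← (hΨd z hz).deriv] at hne
    have hdiff : DifferentiableAt ℂ (fun w => (φ h w - w) / deriv Ψ w) z :=
      (((hhol h hh.le).differentiableAt (isOpen_ball.mem_nhds hz)).sub differentiableAt_id).div
        hΨ' hne
    refine (hdiff.congr_of_eventuallyEq ?_).differentiableWithinAt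
    filter_upwards [isOpen_ball.mem_nhds hz, hΨ'.continuousAt.eventually_ne hne] with w hw hnw
    rw [(hΨd w hw).deriv] at hnw ⊢
    exact hG h hh w hw hnw
  · have hw := hmaps t ht hz
    obtain ⟨h, hh, hne⟩ := exists_integral_deriv_ne_zero hhol hid hcont hw
    rw [hG h hh _ hw hne]
    exact hasDerivWithinAt_semigroup hmaps hhol hsg hcont hh hz ht hne

theorem re_neg_div_nonneg {a b : ℂ} (h : (a * conj b).re ≤ 0) : 0 ≤ (-(a / b)).re := by
  rw [div_eq_mul_inv, inv_def, ← mul_assoc, neg_re, re_mul_ofReal]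
  have : 0 ≤ (normSq b)⁻¹ := inv_nonneg.mpr (normSq_nonneg b)
  nlinarith

/-- The Berkson–Porta form of a generator with a zero in the disk. -/
theorem exists_berkson_porta_of_zero {G : ℂ → ℂ} (hG : DifferentiableOn ℂ G (ball 0 1))
    {τ : ℂ} (hτ : τ ∈ ball (0 : ℂ) 1) (h0 : G τ = 0)
    (hre : ∀ z ∈ ball (0 : ℂ) 1, (G z * conj ((z - τ) * (1 - conj τ * z))).re ≤ 0) :
    ∃ p : ℂ → ℂ, DifferentiableOn ℂ p (ball 0 1) ∧ (∀ z ∈ ball (0 : ℂ) 1, 0 ≤ (p z).re) ∧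
      ∀ z ∈ ball (0 : ℂ) 1, G z = (z - τ) * (conj τ * z - 1) * p z := by
  have hτ1 : ‖τ‖ < 1 := mem_ball_zero_iff.mp hτ
  have hne : ∀ z ∈ ball (0 : ℂ) 1, conj τ * z - 1 ≠ 0 := fun z hz h =>
    one_sub_conj_mul_ne_zero hτ1.le (mem_ball_zero_iff.mp hz) (by rw [← neg_sub, h, neg_zero])
  have hGs : ∀ z, G z = (z - τ) * dslope G τ z := fun z => by
    rw [← smul_eq_mul, sub_smul_dslope, h0, sub_zero]
  set p : ℂ → ℂ := fun z => dslope G τ z / (conj τ * z - 1) with hp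
  have hpd : DifferentiableOn ℂ p (ball 0 1) :=
    ((differentiableOn_dslope (isOpen_ball.mem_nhds hτ)).mpr hG).div (by fun_prop) hne
  have hpne : ∀ z ∈ ball (0 : ℂ) 1, z ≠ τ → 0 ≤ (p z).re := fun z hz hzτ => by
    have hzτ' : z - τ ≠ 0 := sub_ne_zero.mpr hzτ
    have : p z = -(G z / ((z - τ) * (1 - conj τ * z))) := by
      rw [hGs z, mul_div_mul_left _ _ hzτ', ← div_neg, neg_sub]
    rw [this]
    exact re_neg_div_nonneg (hre z hz)
  refine ⟨p, hpd, fun z hz => ?_, fun z hz => ?_⟩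
  · by_cases hzτ : z = τ
    · subst hzτ
      have hcont : Tendsto (fun w => (p w).re) (𝓝[≠] z) (𝓝 (p z).re) :=
        ((Complex.continuous_re.tendsto _).comp
          (hpd.continuousOn.continuousAt (isOpen_ball.mem_nhds hz))).mono_left nhdsWithin_le_nhds
      refine ge_of_tendsto hcont ?_
      filter_upwards [self_mem_nhdsWithin, mem_nhdsWithin_of_mem_nhds (isOpen_ball.mem_nhds hz)]
        with w hw hw'
      exact hpne w hw' hw
    · exact hpne z hz hzτ
  · rw [hGs z, hp, mul_assoc, mul_div_cancel₀ _ (hne z hz)]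

/-- The Berkson–Porta form of a generator without zeros in the disk. -/
theorem exists_berkson_porta_of_ne_zero {G : ℂ → ℂ} (hG : DifferentiableOn ℂ G (ball 0 1))
    (h0 : ∀ z ∈ ball (0 : ℂ) 1, G z ≠ 0)
    (hre : ∀ z ∈ ball (0 : ℂ) 1, ∀ w ∈ ball (0 : ℂ) 1, ∀ ε : ℝ, 0 ≤ ε → G w = ε * w →
      ‖z‖ ≤ ‖w‖ → (G z * conj ((z - w) * (1 - conj w * z))).re ≤ 0) :
    ∃ τ : ℂ, ‖τ‖ = 1 ∧ ∃ p : ℂ → ℂ, DifferentiableOn ℂ p (ball 0 1) ∧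
      (∀ z ∈ ball (0 : ℂ) 1, 0 ≤ (p z).re) ∧
      ∀ z ∈ ball (0 : ℂ) 1, G z = (z - τ) * (conj τ * z - 1) * p z := by
  obtain ⟨r, -, hr, hr1⟩ := exists_seq_strictMono_tendsto' (zero_lt_one' ℝ)
  choose w hwr ε hε hw using fun n =>
    exists_eq_mul_of_ne_zero hG.continuousOn h0 (hr n).1 (hr n).2
  have hwb : ∀ n, w n ∈ ball (0 : ℂ) 1 := fun n => by
    rw [mem_ball_zero_iff, hwr]
    exact (hr n).2
  obtain ⟨τ, -, s, hs, hlim⟩ := (isCompact_closedBall (0 : ℂ) 1).tendsto_subseq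
    fun n => ball_subset_closedBall (hwb n)
  have hrs : Tendsto (fun n => r (s n)) atTop (𝓝 1) := hr1.comp hs.tendsto_atTop
  have hτ : ‖τ‖ = 1 := by
    refine tendsto_nhds_unique hlim.norm ?_
    simpa [Function.comp_def, hwr] using hrs
  have hlimre : ∀ z ∈ ball (0 : ℂ) 1, (G z * conj ((z - τ) * (1 - conj τ * z))).re ≤ 0 := by
    intro z hz
    have hc : Continuous fun v : ℂ => (G z * conj ((z - v) * (1 - conj v * z))).re := by fun_prop
    refine le_of_tendsto ((hc.tendsto τ).comp hlim) ?_
    filter_upwards [hrs.eventually_const_lt (mem_ball_zero_iff.mp hz)] with n hn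
    exact hre z hz _ (hwb _) _ (hε _) (hw _) (hn.le.trans_eq (hwr (s n)).symm)
  have hne1 : ∀ z ∈ ball (0 : ℂ) 1, z - τ ≠ 0 := fun z hz h => by
    rw [mem_ball_zero_iff, sub_eq_zero.mp h, hτ] at hz
    exact lt_irrefl _ hz
  have hne2 : ∀ z ∈ ball (0 : ℂ) 1, conj τ * z - 1 ≠ 0 := fun z hz h =>
    one_sub_conj_mul_ne_zero hτ.le (mem_ball_zero_iff.mp hz) (by rw [← neg_sub, h, neg_zero])
  refine ⟨τ, hτ, fun z => G z / ((z - τ) * (conj τ * z - 1)), ?_, fun z hz => ?_, fun z hz => ?_⟩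
  · exact hG.div (by fun_prop) fun z hz => mul_ne_zero (hne1 z hz) (hne2 z hz)
  · have := re_neg_div_nonneg (hlimre z hz)
    rwa [← div_neg, ← mul_neg, neg_sub] at this
  · rw [mul_div_cancel₀ _ (mul_ne_zero (hne1 z hz) (hne2 z hz))]

/-- Berkson–Porta theorem (representation direction): if `(φ_t)_{t≥0}` is a
one-parameter semigroup of holomorphic self-maps of the unit disk, then there exist a
point `τ` of the closed unit disk and a holomorphic `p : 𝔻 → ℂ` with `Re p ≥ 0` such
that for every `z ∈ 𝔻` the map `t ↦ φ_t(z)` is differentiable on `[0,∞)` and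
`∂φ_t(z)/∂t = G(φ_t(z))` where `G(w) = (w − τ)(conj(τ)w − 1)p(w)`. -/
theorem berkson_porta_representation (φ : ℝ → ℂ → ℂ)
    (hmaps : ∀ t : ℝ, 0 ≤ t →
      Set.MapsTo (φ t) (Metric.ball (0 : ℂ) 1) (Metric.ball 0 1))
    (hhol : ∀ t : ℝ, 0 ≤ t → DifferentiableOn ℂ (φ t) (Metric.ball 0 1))
    (hid : ∀ z ∈ Metric.ball (0 : ℂ) 1, φ 0 z = z)
    (hsg : ∀ s t : ℝ, 0 ≤ s → 0 ≤ t → ∀ z ∈ Metric.ball (0 : ℂ) 1,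
      φ (t + s) z = φ s (φ t z))
    (hcont : ∀ t₀ : ℝ, 0 ≤ t₀ → TendstoLocallyUniformlyOn (fun t => φ t) (φ t₀)
      (nhdsWithin t₀ (Set.Ici 0)) (Metric.ball 0 1)) :
    ∃ τ ∈ Metric.closedBall (0 : ℂ) 1, ∃ p : ℂ → ℂ,
      DifferentiableOn ℂ p (Metric.ball 0 1) ∧
      (∀ z ∈ Metric.ball (0 : ℂ) 1, 0 ≤ (p z).re) ∧
      ∀ z ∈ Metric.ball (0 : ℂ) 1, ∀ t : ℝ, 0 ≤ t →
        HasDerivWithinAt (fun u => φ u z)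
          ((φ t z - τ) * ((starRingEnd ℂ) τ * φ t z - 1) * p (φ t z))
          (Set.Ici 0) t := by
  obtain ⟨G, hGd, hG⟩ := exists_generator hmaps hhol hid hsg hcont
  have hG0 : ∀ z ∈ ball (0 : ℂ) 1, HasDerivWithinAt (fun u => φ u z) (G z) (Ici 0) 0 :=
    fun z hz => by simpa only [hid z hz] using hG z hz 0 le_rfl
  obtain ⟨τ, hτ, p, hp, hpre, hGp⟩ : ∃ τ ∈ closedBall (0 : ℂ) 1, ∃ p : ℂ → ℂ,
      DifferentiableOn ℂ p (ball 0 1) ∧ (∀ z ∈ ball (0 : ℂ) 1, 0 ≤ (p z).re) ∧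
      ∀ z ∈ ball (0 : ℂ) 1, G z = (z - τ) * (conj τ * z - 1) * p z := by
    by_cases h0 : ∃ τ ∈ ball (0 : ℂ) 1, G τ = 0
    · obtain ⟨τ, hτ, hGτ⟩ := h0
      exact ⟨τ, ball_subset_closedBall hτ, exists_berkson_porta_of_zero hGd hτ hGτ fun z hz =>
        re_generator_mul_conj_nonpos hmaps hhol hid hG0 hz hτ le_rfl (by simp [hGτ]) (.inl rfl)⟩
    · push Not at h0
      obtain ⟨τ, hτ, hp⟩ := exists_berkson_porta_of_ne_zero hGd h0 fun z hz w hw ε hε hGw hzw =>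
        re_generator_mul_conj_nonpos hmaps hhol hid hG0 hz hw hε hGw (.inr hzw)
      exact ⟨τ, mem_closedBall_zero_iff.mpr hτ.le, hp⟩
  refine ⟨τ, hτ, p, hp, hpre, fun z hz t ht => ?_⟩
  rw [← hGp _ (hmaps t ht hz)]
  exact hG z hz t ht

end
end
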